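/- Let T be a string of length n and 1 ≤ ℓ ≤ r ≤ j ≤ n. Let p_1 be the starting position of the maximal suffix in Suf[ℓ, r], with ℓ ≤ p_1 − 1, and let p_2 be the starting position of the maximal suffix in Suf[ℓ, p_1 − 1]. Set P_1 = T[p_1..j], P_2 = T[p_2..j] and ρ = T[p_2..p_1 − 1]. Assume P_1 is a prefix of P_2 and |P_2| ≤ 2|P_1|. Then ρ is the shortest period of P_2; that is, P_2 = ρ^s ρ' where s ≥ 1 and ρ' is a proper prefix of ρ, and no shorter string admits such a decomposition of P_2. Moreover, s ≥ 2. -/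

import Mathlib

/-!
Since `P₂ = ρ P₁` and `P₁` is a prefix of `P₂`, copies of `ρ` can be peeled off the front of `P₂`
until less than `|ρ|` letters remain, so `ρ` is a period; `|P₂| ≤ 2|P₁|` says `2|ρ| ≤ |P₂|`, which
forces two copies. For minimality it suffices that `ρ` itself is unbordered. Let `R = T[p₁..]`, so
that `T[p₂..] = ρ R`. If `ρ` had a nontrivial border `b`, say `ρ = b y`, then `b R ≼ b y R` by
maximality of `p₂`, hence `R ≼ y R`; but `y R ≼ ρ R ≼ R` by maximality of `p₂` and `p₁`, so
`y = []`.
-/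

variable {α : Type*} [LinearOrder α]

/-- `substr T i j` is the 1-indexed substring `T[i..j]` (inclusive). -/
def substr (T : List α) (i j : ℕ) : List α := (T.drop (i - 1)).take (j - i + 1)

/-- `sufFrom T i` is the 1-indexed suffix `T[i..]`. -/
def sufFrom (T : List α) (i : ℕ) : List α := T.drop (i - 1)

/-- `lrep w a` is `w^a`, the concatenation of `a` copies of `w`. -/
def lrep (w : List α) (a : ℕ) : List α := (List.replicate a w).flatten

/-- `ρ` is a period of `w`: `w = ρ^s ρ'` for an integer `s ≥ 1` and a proper prefix `ρ'` of `ρ`. -/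
def IsPeriodOf (ρ w : List α) : Prop :=
  ∃ s ρ', 1 ≤ s ∧ ρ' <+: ρ ∧ ρ' ≠ ρ ∧ w = lrep ρ s ++ ρ'

section Powers

variable {β : Type*} {ρ w P : List β}

theorem lrep_succ (w : List β) (a : ℕ) : lrep w (a + 1) = w ++ lrep w a := by
  simp [lrep, List.replicate_succ]

theorem lrep_succ' (w : List β) (a : ℕ) : lrep w (a + 1) = lrep w a ++ w := by
  simp [lrep, List.replicate_succ']

theorem length_lrep (w : List β) (a : ℕ) : (lrep w a).length = a * w.length := by
  simp [lrep]

theorem isPeriodOf_append_of_prefix (hρ : ρ ≠ []) (h : P <+: ρ ++ P) :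
    IsPeriodOf ρ (ρ ++ P) := by
  induction hn : P.length using Nat.strong_induction_on generalizing P with
  | _ n ih =>
    obtain hlt | hle := lt_or_ge P.length ρ.length
    · have hPρ : P <+: ρ := List.prefix_of_prefix_length_le h (List.prefix_append ρ P) hlt.le
      exact ⟨1, P, le_rfl, hPρ, fun heq => hlt.ne (congrArg List.length heq), by simp [lrep]⟩
    · obtain ⟨Q, rfl⟩ := List.prefix_of_prefix_length_le (List.prefix_append ρ P) h hle
      have hQ : Q <+: ρ ++ Q := (List.prefix_append_right_inj ρ).mp h
      have hQn : Q.length < n := by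
        have := List.length_pos_iff.mpr hρ
        rw [List.length_append] at hn
        omega
      obtain ⟨s, ρ', -, hpre, hne, heq⟩ := ih Q.length hQn hQ rfl
      exact ⟨s + 1, ρ', s.succ_pos, hpre, hne, by rw [heq, lrep_succ, List.append_assoc]⟩

namespace IsPeriodOf

theorem ne_nil (h : IsPeriodOf ρ w) : ρ ≠ [] := by
  rintro rfl
  obtain ⟨_, _, _, hpre, hne, _⟩ := h
  exact hne (List.prefix_nil.mp hpre)

theorem hasPeriod (h : IsPeriodOf ρ w) : w.HasPeriod ρ.length := by
  obtain ⟨s, ρ', hs, hpre, -, rfl⟩ := h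
  have htake : (lrep ρ s ++ ρ').take ρ.length = ρ := by
    obtain ⟨t, rfl⟩ := Nat.exists_eq_add_of_le' hs
    rw [lrep_succ, List.append_assoc, List.take_left]
  have hcomm : ρ ++ (lrep ρ s ++ ρ') = lrep ρ s ++ (ρ ++ ρ') := by
    rw [← List.append_assoc, ← lrep_succ, lrep_succ', List.append_assoc]
  rw [List.HasPeriod, htake, hcomm, List.prefix_append_right_inj]
  exact hpre.trans (List.prefix_append ρ ρ')

theorem exists_le_exponent {k : ℕ} (h : IsPeriodOf ρ w) (hk : k * ρ.length ≤ w.length) :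
    ∃ s ρ', k ≤ s ∧ ρ' <+: ρ ∧ ρ' ≠ ρ ∧ w = lrep ρ s ++ ρ' := by
  obtain ⟨s, ρ', -, hpre, hne, rfl⟩ := h
  have hlt : ρ'.length < ρ.length := hpre.length_le.lt_of_ne (mt hpre.eq_of_length hne)
  have hks : k * ρ.length < (s + 1) * ρ.length := by
    rw [List.length_append, length_lrep] at hk
    rw [add_one_mul]
    omega
  exact ⟨s, ρ', Nat.lt_succ_iff.mp (Nat.lt_of_mul_lt_mul_right hks), hpre, hne, rfl⟩

end IsPeriodOf

end Powers

section Substrings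

variable {β : Type*} {i j k : ℕ}

theorem length_substr {T : List β} (hi : 1 ≤ i) (hij : i ≤ j) (hj : j ≤ T.length) :
    (substr T i j).length = j + 1 - i := by
  rw [substr, List.length_take, List.length_drop]
  omega

theorem substr_append_substr (T : List β) (hi : 1 ≤ i) (hik : i < k) (hkj : k ≤ j) :
    substr T i (k - 1) ++ substr T k j = substr T i j := by
  have hk : k - 1 = i - 1 + (k - 1 - i + 1) := by omega
  have hj : j - i + 1 = k - 1 - i + 1 + (j - k + 1) := by omega
  simp only [substr]
  rw [hj, List.take_add (i := k - 1 - i + 1), List.drop_drop, ← hk]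

theorem substr_append_sufFrom (T : List β) (hi : 1 ≤ i) (hik : i < k) :
    substr T i (k - 1) ++ sufFrom T k = sufFrom T i := by
  have hk : k - 1 = i - 1 + (k - 1 - i + 1) := by omega
  rw [substr, sufFrom, sufFrom, hk, ← List.drop_drop, ← hk, List.take_append_drop]

theorem drop_sufFrom (T : List β) (hi : 1 ≤ i) (m : ℕ) :
    (sufFrom T i).drop m = sufFrom T (i + m) := by
  rw [sufFrom, sufFrom, List.drop_drop, Nat.sub_add_comm hi]

end Substrings

theorem le_of_append_le_append_left {u x y : List α} (h : u ++ x ≤ u ++ y) : x ≤ y :=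
  not_lt.mp fun hyx => h.not_gt (List.append_left_lt hyx)

theorem eq_nil_of_append_le {y R : List α} (hle : y ++ R ≤ R) (hge : R ≤ y ++ R) : y = [] :=
  List.append_left_eq_self.mp (hle.antisymm hge)

theorem length_le_of_hasPeriod_of_forall_drop_le {ρ R : List α} {p : ℕ}
    (hmax : ∀ m < ρ.length, (ρ ++ R).drop m ≤ ρ ++ R) (hR : ρ ++ R ≤ R)
    (hp : 0 < p) (hper : ρ.HasPeriod p) : ρ.length ≤ p := by
  by_contra! hlt
  obtain ⟨y, hy⟩ := hper.drop_prefix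
  set b := ρ.drop p
  have hblen : b.length = ρ.length - p := List.length_drop
  have hR_le : R ≤ y ++ R := by
    have hbR : b ++ R ≤ ρ ++ R := by
      simpa only [List.drop_append_of_le_length hlt.le] using hmax p hlt
    rw [← hy, List.append_assoc] at hbR
    exact le_of_append_le_append_left hbR
  have hle_R : y ++ R ≤ R := by
    refine le_trans ?_ hR
    simpa only [← hy, List.append_assoc, List.drop_left] using hmax b.length (by omega)
  have hlen := congrArg List.length hy
  rw [eq_nil_of_append_le hle_R hR_le, List.append_nil] at hlen
  omega

theorem stmt_8_general (T : List α) (j p₁ p₂ : ℕ)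
    (hp₂ : 1 ≤ p₂) (hp : p₂ < p₁) (hp₁j : p₁ ≤ j) (hj : j ≤ T.length)
    (hp₂max : ∀ q, p₂ ≤ q → q < p₁ → sufFrom T q ≤ sufFrom T p₂)
    (hp₁ : sufFrom T p₂ ≤ sufFrom T p₁)
    (hpre : substr T p₁ j <+: substr T p₂ j)
    (hlen : (substr T p₂ j).length ≤ 2 * (substr T p₁ j).length) :
    (∃ s ρ', 2 ≤ s ∧ ρ' <+: substr T p₂ (p₁ - 1) ∧ ρ' ≠ substr T p₂ (p₁ - 1) ∧
        substr T p₂ j = lrep (substr T p₂ (p₁ - 1)) s ++ ρ') ∧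
    ∀ γ : List α, IsPeriodOf γ (substr T p₂ j) →
      (substr T p₂ (p₁ - 1)).length ≤ γ.length := by
  have hρlen := length_substr hp₂ (Nat.le_sub_one_of_lt hp) (by omega : p₁ - 1 ≤ T.length)
  have hsplit := substr_append_substr T hp₂ hp hp₁j
  have hsuf := substr_append_sufFrom T hp₂ hp
  set ρ := substr T p₂ (p₁ - 1)
  rw [← hsplit] at hpre hlen ⊢
  constructor
  · have hρ : ρ ≠ [] := List.length_pos_iff.mp (by omega)
    refine (isPeriodOf_append_of_prefix hρ hpre).exists_le_exponent ?_
    rw [List.length_append] at hlen ⊢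
    omega
  · intro γ hγ
    have hper : ρ.HasPeriod γ.length := hγ.hasPeriod.infix (List.prefix_append ρ _).isInfix
    refine length_le_of_hasPeriod_of_forall_drop_le (R := sufFrom T p₁) (fun m hm => ?_)
      (hsuf ▸ hp₁) (List.length_pos_iff.mpr hγ.ne_nil) hper
    rw [hsuf, drop_sufFrom T hp₂]
    exact hp₂max _ (by omega) (by omega)

/-- Let `T` be a string of length `n`, `1 ≤ ℓ ≤ r ≤ j ≤ n`, let `p₁` be the starting position of
the maximal suffix in `Suf[ℓ, r]` with `ℓ ≤ p₁ - 1`, and `p₂` the starting position of the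
maximal suffix in `Suf[ℓ, p₁-1]`.  Set `P₁ = T[p₁..j]`, `P₂ = T[p₂..j]`, `ρ = T[p₂..p₁-1]`.
If `P₁` is a prefix of `P₂` and `|P₂| ≤ 2|P₁|`, then `ρ` is the shortest period of `P₂`:
`P₂ = ρ^s ρ'` with `s ≥ 1` (indeed `s ≥ 2`) and `ρ'` a proper prefix of `ρ`, and every period
of `P₂` has length at least `|ρ|`. -/
theorem stmt_8 (T : List α) (ℓ r j p₁ p₂ : ℕ)
    (hℓ : 1 ≤ ℓ) (hℓr : ℓ ≤ r) (hrj : r ≤ j) (hj : j ≤ T.length)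
    (hp11 : ℓ ≤ p₁) (hp12 : p₁ ≤ r)
    (hp1max : ∀ q, ℓ ≤ q → q ≤ r → ¬ List.Lex (· < ·) (sufFrom T p₁) (sufFrom T q))
    (hℓp1 : ℓ ≤ p₁ - 1)
    (hp21 : ℓ ≤ p₂) (hp22 : p₂ ≤ p₁ - 1)
    (hp2max : ∀ q, ℓ ≤ q → q ≤ p₁ - 1 →
      ¬ List.Lex (· < ·) (sufFrom T p₂) (sufFrom T q))
    (hpre : substr T p₁ j <+: substr T p₂ j)
    (hlen : (substr T p₂ j).length ≤ 2 * (substr T p₁ j).length) :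
    (∃ s ρ', 2 ≤ s ∧ ρ' <+: substr T p₂ (p₁ - 1) ∧ ρ' ≠ substr T p₂ (p₁ - 1) ∧
        substr T p₂ j = lrep (substr T p₂ (p₁ - 1)) s ++ ρ') ∧
    ∀ γ : List α, IsPeriodOf γ (substr T p₂ j) →
      (substr T p₂ (p₁ - 1)).length ≤ γ.length :=
  stmt_8_general T j p₁ p₂ (by omega) (by omega) (by omega) hj
    (fun q hq hqp => not_lt.mp (hp2max q (by omega) (by omega)))
    (not_lt.mp (hp1max p₂ hp21 (by omega))) hpre hlen
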